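/- Let 𝒢 be a finite dimensional split semisimple Lie algebra with splitting Cartan subalgebra ℋ, root system R, nonzero root α ∈ R, and λ ∈ Π a weight of a finite dimensional 𝒢-module 𝒱 with weight space decomposition. If α + λ ∈ Π and dim 𝒱_{λ+α} = 1, then 𝒢_α · 𝒱_λ = 𝒱_{λ+α}. -/

import Mathlib

/-- Weight space of a module over a Lie algebra with respect to a subalgebra. -/
def wtSpace {F G V : Type*} [Field F] [LieRing G] [LieAlgebra F G]
    [AddCommGroup V] [Module F V] [LieRingModule G V] [LieModule F G V]
    (H : LieSubalgebra F G) (χ : Module.Dual F H) : Submodule F V where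
  carrier := {v | ∀ h : H, ⁅(h : G), v⁆ = χ h • v}
  add_mem' := by
    intro a b ha hb h
    rw [lie_add, ha h, hb h, smul_add]
  zero_mem' := by
    intro h
    simp
  smul_mem' := by
    intro c v hv h
    rw [lie_smul, hv h, smul_comm]

/-!
Choose an `sl₂`-triple `(h, e, f)` with `e` in the root space of `α` and `f` in that of `-α`. If
`w ≠ 0` satisfies `⁅h, w⁆ = c • w` and `⁅e, ⁅f, w⁆⁆ = 0`, then
`f (e ^ (k + 1) w) = -((k + 1) * (c + k)) • e ^ k w`, and since some power of `e` kills `w`, `c` is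
zero or a negative integer. On the other hand, a nonzero vector of weight `lam` killed by `e` is
primitive, so that `lam h` is a natural number and `(lam + α) h = lam h + 2 > 0`; then `e ∘ f` is
injective on `V_{lam+α}`. So `e : V_lam → V_{lam+α}` is injective or surjective, and it is
surjective in both cases as soon as `dim V_{lam+α} ≤ dim V_lam`.
-/

open LieAlgebra LieModule

section Sl2

variable {R L M : Type*} [CommRing R] [LieRing L] [LieAlgebra R L]
  [AddCommGroup M] [Module R M] [LieRingModule L M] [LieModule R L M]
  {h e f : L} {c : R} {w : M}

lemma lie_h_toEnd_e_pow_apply (t : IsSl2Triple h e f) (hw : ⁅h, w⁆ = c • w) (k : ℕ) :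
    ⁅h, (toEnd R L M e ^ k) w⁆ = (c + 2 * k) • (toEnd R L M e ^ k) w := by
  induction k with
  | zero => simpa using hw
  | succ k ih =>
    rw [pow_succ', Module.End.mul_apply, toEnd_apply_apply, leibniz_lie, ih, t.lie_h_e_smul R,
      smul_lie, lie_smul, ← add_smul]
    congr 1
    push_cast
    ring

lemma lie_f_toEnd_e_pow_succ_apply (t : IsSl2Triple h e f) (hw : ⁅h, w⁆ = c • w)
    (hefw : ⁅e, ⁅f, w⁆⁆ = 0) (k : ℕ) :
    ⁅f, (toEnd R L M e ^ (k + 1)) w⁆ = (-((k + 1) * (c + k))) • (toEnd R L M e ^ k) w := by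
  have lie_f_lie_e (x : M) : ⁅f, ⁅e, x⁆⁆ = ⁅e, ⁅f, x⁆⁆ - ⁅h, x⁆ := by
    rw [← t.lie_e_f, lie_lie, sub_sub_cancel]
  induction k with
  | zero => simp [lie_f_lie_e, hefw, hw]
  | succ k ih =>
    rw [pow_succ', Module.End.mul_apply, toEnd_apply_apply, lie_f_lie_e, ih, lie_smul,
      ← toEnd_apply_apply R L M e, ← Module.End.mul_apply, ← pow_succ',
      lie_h_toEnd_e_pow_apply t hw, ← sub_smul]
    congr 1
    push_cast
    ring

variable [IsDomain R] [CharZero R] [Module.IsTorsionFree R M] [IsNoetherian R M]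

lemma exists_toEnd_e_pow_apply_eq_zero (t : IsSl2Triple h e f) (hw : ⁅h, w⁆ = c • w) :
    ∃ k : ℕ, (toEnd R L M e ^ k) w = 0 := by
  by_contra! hne
  have hinj : Function.Injective fun k : ℕ ↦ c + 2 * k := fun a b hab ↦ by simpa using hab
  refine Set.infinite_of_injective_forall_mem hinj (fun k ↦ ?_)
    (Module.End.finite_hasEigenvalue (toEnd R L M h))
  exact Module.End.hasEigenvalue_of_hasEigenvector
    ⟨Module.End.mem_eigenspace_iff.mpr (lie_h_toEnd_e_pow_apply t hw k), hne k⟩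

lemma exists_nat_eq_neg_of_lie_e_lie_f_eq_zero (t : IsSl2Triple h e f) (hw0 : w ≠ 0)
    (hw : ⁅h, w⁆ = c • w) (hefw : ⁅e, ⁅f, w⁆⁆ = 0) : ∃ k : ℕ, c = -k := by
  obtain ⟨k, hk, hk'⟩ := Nat.exists_not_and_succ_of_not_zero_of_exists
    (p := fun k ↦ (toEnd R L M e ^ k) w = 0) hw0 (exists_toEnd_e_pow_apply_eq_zero t hw)
  have hcoeff := lie_f_toEnd_e_pow_succ_apply t hw hefw k
  rw [hk', lie_zero, eq_comm, smul_eq_zero_iff_left hk, neg_eq_zero, mul_eq_zero] at hcoeff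
  exact ⟨k, eq_neg_of_add_eq_zero_left (hcoeff.resolve_left (Nat.cast_add_one_ne_zero k))⟩

end Sl2

lemma finrank_map_of_disjoint_ker {R M N : Type*} [Ring R] [AddCommGroup M] [Module R M]
    [AddCommGroup N] [Module R N] {p : Submodule R M} {φ : M →ₗ[R] N} (hp : Disjoint p φ.ker) :
    Module.finrank R (p.map φ) = Module.finrank R p := by
  rw [← LinearMap.range_domRestrict]
  exact LinearMap.finrank_range_of_inj (LinearMap.injective_domRestrict_iff.mpr hp)

section Field

variable {F G V : Type*} [Field F] [LieRing G] [LieAlgebra F G]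
  [AddCommGroup V] [Module F V] [LieRingModule G V] [LieModule F G V]

section Sl2

variable [CharZero F] [FiniteDimensional F V] {h e f : G} {c : F} {p q : Submodule F V}

lemma disjoint_ker_or_map_toEnd_e_eq (t : IsSl2Triple h e f)
    (hp : ∀ v ∈ p, ⁅h, v⁆ = c • v) (hq : ∀ w ∈ q, ⁅h, w⁆ = (c + 2) • w)
    (he : p.map (toEnd F G V e) ≤ q) (hf : q.map (toEnd F G V f) ≤ p) :
    Disjoint p (toEnd F G V e).ker ∨ p.map (toEnd F G V e) = q := by
  refine or_iff_not_imp_left.mpr fun hdisj ↦ ?_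
  obtain ⟨v, hv, hev, hv0⟩ : ∃ v ∈ p, ⁅e, v⁆ = 0 ∧ v ≠ 0 := by
    simpa [Submodule.disjoint_def] using hdisj
  have hprim : t.HasPrimitiveVectorWith v c := ⟨hv0, hp v hv, hev⟩
  obtain ⟨n, rfl⟩ := hprim.exists_nat
  have hinj : Disjoint q (toEnd F G V e ∘ₗ toEnd F G V f).ker := by
    refine Submodule.disjoint_def.mpr fun w hw hefw ↦ by_contra fun hw0 ↦ ?_
    obtain ⟨k, hk⟩ := exists_nat_eq_neg_of_lie_e_lie_f_eq_zero t hw0 (hq w hw) hefw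
    have : ((n + 2 + k : ℕ) : F) = 0 := by
      push_cast
      linear_combination hk
    exact absurd (Nat.cast_eq_zero.mp this) (by lia)
  refine Submodule.eq_of_le_of_finrank_le he ?_
  calc Module.finrank F q
      = Module.finrank F (q.map (toEnd F G V e ∘ₗ toEnd F G V f)) :=
        (finrank_map_of_disjoint_ker hinj).symm
    _ ≤ Module.finrank F (p.map (toEnd F G V e)) := by
        rw [Submodule.map_comp]
        exact Submodule.finrank_mono (Submodule.map_mono hf)

lemma map_toEnd_e_eq_of_finrank_le (t : IsSl2Triple h e f)
    (hp : ∀ v ∈ p, ⁅h, v⁆ = c • v) (hq : ∀ w ∈ q, ⁅h, w⁆ = (c + 2) • w)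
    (he : p.map (toEnd F G V e) ≤ q) (hf : q.map (toEnd F G V f) ≤ p)
    (hdim : Module.finrank F q ≤ Module.finrank F p) :
    p.map (toEnd F G V e) = q := by
  rcases disjoint_ker_or_map_toEnd_e_eq t hp hq he hf with hdisj | hmap
  · exact Submodule.eq_of_le_of_finrank_le he
      (hdim.trans_eq (finrank_map_of_disjoint_ker hdisj).symm)
  · exact hmap

end Sl2

section WeightSpace

variable {H : LieSubalgebra F G}

lemma lie_mem_wtSpace_add {α lam : Module.Dual F H} {x : G} {v : V}
    (hx : x ∈ wtSpace H α) (hv : v ∈ wtSpace H lam) : ⁅x, v⁆ ∈ wtSpace H (lam + α) := fun k ↦ by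
  rw [leibniz_lie, hx k, hv k, smul_lie, lie_smul, ← add_smul, LinearMap.add_apply, add_comm]

lemma isTriangularizable_of_iSup_wtSpace_eq_top
    (hsplit : ⨆ χ : Module.Dual F H, (wtSpace H χ : Submodule F V) = ⊤) :
    IsTriangularizable F H V where
  maxGenEigenspace_eq_top x := by
    rw [eq_top_iff, ← hsplit]
    refine iSup_le fun χ ↦ le_iSup_of_le (χ x) fun v hv ↦ ?_
    exact Module.End.mem_maxGenEigenspace _ _ _ |>.mpr ⟨1, by simp [hv x]⟩

end WeightSpace

lemma exists_isSl2Triple_mem_wtSpace [CharZero F] [FiniteDimensional F G] [IsKilling F G]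
    {H : LieSubalgebra F G} [H.IsCartanSubalgebra] [IsTriangularizable F H G]
    {α : Module.Dual F H} (hα : (wtSpace H α : Submodule F G) ≠ ⊥) (hα0 : α ≠ 0) :
    ∃ (h : H) (e f : G), IsSl2Triple (h : G) e f ∧ e ∈ (wtSpace H α : Submodule F G) ∧
      f ∈ (wtSpace H (-α) : Submodule F G) ∧ α h = 2 := by
  have hα_root : rootSpace H α ≠ ⊥ := fun hbot ↦ hα <| (Submodule.eq_bot_iff _).mpr fun x hx ↦
    (LieSubmodule.eq_bot_iff _).mp hbot x <|
      weightSpace_le_genWeightSpace _ _ ((mem_weightSpace _ _).mpr hx)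
  let a : Weight F H G := ⟨α, hα_root⟩
  have ha : a.IsNonZero := fun h0 ↦ hα0 (DFunLike.coe_injective h0)
  obtain ⟨h, e, f, t, he, hf⟩ := IsKilling.exists_isSl2Triple_of_weight_isNonZero ha
  obtain rfl := t.h_eq_coroot ha he hf
  exact ⟨_, e, f, t, IsKilling.lie_eq_smul_of_mem_rootSpace he,
    IsKilling.lie_eq_smul_of_mem_rootSpace hf, IsKilling.root_apply_coroot ha⟩

end Field

theorem stmt_1_general {F G V : Type*} [Field F] [CharZero F]
    [LieRing G] [LieAlgebra F G]
    [AddCommGroup V] [Module F V] [LieRingModule G V] [LieModule F G V]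
    [FiniteDimensional F G] [FiniteDimensional F V]
    [LieAlgebra.IsSemisimple F G]
    (H : LieSubalgebra F G) [H.IsCartanSubalgebra]
    (hGsplit : (⨆ χ : Module.Dual F H, (wtSpace H χ : Submodule F G)) = ⊤)
    (α lam : Module.Dual F H)
    (hα : (wtSpace H α : Submodule F G) ≠ ⊥) (hα0 : α ≠ 0)
    (hdim : Module.finrank F (wtSpace H (lam + α) : Submodule F V) ≤
      Module.finrank F (wtSpace H lam : Submodule F V)) :
    Submodule.span F {u : V | ∃ x ∈ (wtSpace H α : Submodule F G),
        ∃ v ∈ (wtSpace H lam : Submodule F V), u = ⁅x, v⁆} =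
      (wtSpace H (lam + α) : Submodule F V) := by
  have := isTriangularizable_of_iSup_wtSpace_eq_top hGsplit
  obtain ⟨h, e, f, t, he, hf, hαh⟩ := exists_isSl2Triple_mem_wtSpace hα hα0
  have hmap : (wtSpace H lam).map (toEnd F G V e) = wtSpace H (lam + α) := by
    refine map_toEnd_e_eq_of_finrank_le t (fun v hv ↦ hv h) (fun w hw ↦ ?_)
      (Submodule.map_le_iff_le_comap.mpr fun v hv ↦ lie_mem_wtSpace_add he hv)
      (Submodule.map_le_iff_le_comap.mpr fun w hw ↦ ?_) hdim
    · rw [hw h, LinearMap.add_apply, hαh]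
    · simpa using lie_mem_wtSpace_add hf hw
  refine le_antisymm (Submodule.span_le.mpr ?_) (hmap.ge.trans ?_)
  · rintro _ ⟨x, hx, v, hv, rfl⟩
    exact lie_mem_wtSpace_add hx hv
  · rintro _ ⟨v, hv, rfl⟩
    exact Submodule.subset_span ⟨e, he, v, hv, rfl⟩

/-- in the setting of a finite dimensional split semisimple Lie
algebra `𝒢` with splitting Cartan subalgebra `H`, root system `R`, a nonzero
root `α`, and a weight `lam` of a finite dimensional `𝒢`-module `V` with weight
space decomposition, if `lam + α` is a weight and `dim V_{lam+α} = 1`, then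
`𝒢_α ⬝ V_lam = V_{lam+α}`. -/
theorem stmt_1 {F G V : Type*} [Field F] [CharZero F]
    [LieRing G] [LieAlgebra F G]
    [AddCommGroup V] [Module F V] [LieRingModule G V] [LieModule F G V]
    [FiniteDimensional F G] [FiniteDimensional F V]
    [LieAlgebra.IsSemisimple F G]
    (H : LieSubalgebra F G) [H.IsCartanSubalgebra]
    (hGsplit : (⨆ χ : Module.Dual F H, (wtSpace H χ : Submodule F G)) = ⊤)
    (hVsplit : (⨆ χ : Module.Dual F H, (wtSpace H χ : Submodule F V)) = ⊤)
    (α lam : Module.Dual F H)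
    (hα : (wtSpace H α : Submodule F G) ≠ ⊥) (hα0 : α ≠ 0)
    (hlam : (wtSpace H lam : Submodule F V) ≠ ⊥)
    (hsum : (wtSpace H (lam + α) : Submodule F V) ≠ ⊥)
    (hdim : Module.finrank F (wtSpace H (lam + α) : Submodule F V) = 1) :
    Submodule.span F {u : V | ∃ x ∈ (wtSpace H α : Submodule F G),
        ∃ v ∈ (wtSpace H lam : Submodule F V), u = ⁅x, v⁆} =
      (wtSpace H (lam + α) : Submodule F V) := by
  refine stmt_1_general H hGsplit α lam hα hα0 ?_
  exact hdim.trans_le (Submodule.one_le_finrank_iff.mpr hlam)
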